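/- Let G := Aff(m) = GL(m,ℝ) ⋉ ℝᵐ be the affine group acting on ℝᵐ by (L,t)·x = Lx + t, and let π : G → U(L²(ℝᵐ)) be the quasi-regular representation defined by π_{(L,t)}[f](x) := |det L|^{−1/2} f(L⁻¹(x − t)) for f ∈ L²(ℝᵐ). Then π is an irreducible unitary representation: its only closed invariant subspaces are {0} and L²(ℝᵐ). -/

import Mathlib

open MeasureTheory Matrix

/-!
Let `V` be a closed invariant subspace, `f ∈ V` and `g ∈ Vᗮ`. Already for diagonal `L` invariance
says that the cross-correlation of `g` with every dilate `x ↦ f (a * x)` vanishes, `a` being a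
vector with nonzero coordinates. The cross-correlation is the Fourier transform of the integrable
function `ξ ↦ ⟪𝓕 g ξ, 𝓕 f (a⁻¹ * ξ)⟫`, up to a nonzero factor, so for each `a` this function
vanishes almost everywhere. Coordinatewise multiplication acts transitively on the conull set of
vectors with nonzero coordinates; by Fubini, if `𝓕 g` is nonzero on a set of positive measure then
`𝓕 f (a * ξ) = 0` for a suitable such `ξ` and almost every `a`, whence `𝓕 f = 0`. Thus one of `f`
and `g` is zero.
-/

open scoped FourierTransform SchwartzMap ContDiff InnerProductSpace

section LinearChangeOfVariables

variable {E F : Type*} [NormedAddCommGroup E] [NormedSpace ℝ E] [FiniteDimensional ℝ E]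
  [MeasurableSpace E] [BorelSpace E] [NormedAddCommGroup F] (μ : Measure E) [μ.IsAddHaarMeasure]

theorem quasiMeasurePreserving_linearEquiv (A : E ≃ₗ[ℝ] E) :
    Measure.QuasiMeasurePreserving A μ μ :=
  Measure.LinearMap.quasiMeasurePreserving μ A A.isUnit_det'.ne_zero

variable {μ} in
theorem memLp_comp_linearEquiv {p : ENNReal} {f : E → F} (hf : MemLp f p μ)
    (A : E ≃ₗ[ℝ] E) : MemLp (f ∘ A) p μ := by
  refine MemLp.comp_of_map ?_ (quasiMeasurePreserving_linearEquiv μ A).aemeasurable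
  have hmap := Measure.map_linearMap_addHaar_eq_smul_addHaar μ A.isUnit_det'.ne_zero
  rw [LinearEquiv.coe_coe] at hmap
  exact hmap ▸ hf.smul_measure ENNReal.ofReal_ne_top

theorem integral_comp_linearEquiv [NormedSpace ℝ F] (A : E ≃ₗ[ℝ] E) (f : E → F) :
    ∫ x, f (A x) ∂μ = |LinearMap.det (A : E →ₗ[ℝ] E)|⁻¹ • ∫ x, f x ∂μ := by
  have hmap := Measure.map_linearMap_addHaar_eq_smul_addHaar μ A.isUnit_det'.ne_zero
  have hemb : MeasurableEmbedding A :=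
    A.toContinuousLinearEquiv.toHomeomorph.measurableEmbedding
  rw [LinearEquiv.coe_coe] at hmap
  rw [← hemb.integral_map, hmap, integral_smul_measure, ENNReal.toReal_ofReal (abs_nonneg _),
    abs_inv]

end LinearChangeOfVariables

section UnitDilation

variable {R : Type*} [NormedRing R] [NormedAlgebra ℝ R] [FiniteDimensional ℝ R]
  [MeasurableSpace R] [BorelSpace R] {μ : Measure R} [μ.IsAddHaarMeasure]

theorem ae_of_ae_mul_unit {p : R → Prop} (u : Rˣ) (h : ∀ᵐ x ∂μ, p (x * u)) : ∀ᵐ x ∂μ, p x := by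
  have hdiv := quasiMeasurePreserving_linearEquiv μ (Units.mulRightLinearEquiv ℝ u⁻¹)
  filter_upwards [hdiv.ae h] with x hx
  simpa using hx

theorem ae_or_ae_of_forall_units_mul (hunit : ∀ᵐ x ∂μ, IsUnit x) {p q : R → Prop}
    (hp : MeasurableSet {x | p x}) (hq : MeasurableSet {x | q x})
    (h : ∀ b : Rˣ, ∀ᵐ x ∂μ, p x ∨ q (b * x)) : (∀ᵐ x ∂μ, p x) ∨ ∀ᵐ x ∂μ, q x := by
  refine or_iff_not_imp_right.2 fun hq' => ?_
  have hmeas : MeasurableSet {z : R × R | p z.2 ∨ q (z.1 * z.2)} :=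
    (measurable_snd hp).union (measurable_mul hq)
  have hmul : ∀ᵐ b ∂μ, ∀ᵐ x ∂μ, p x ∨ q (b * x) := by
    filter_upwards [hunit] with b hb using h hb.unit
  filter_upwards [(Measure.ae_ae_comm hmeas).1 hmul, hunit] with x hx hux
  by_contra hpx
  exact hq' (ae_of_ae_mul_unit hux.unit (hx.mono fun b hb => hb.resolve_left hpx))

end UnitDilation

theorem ae_isUnit_pi {ι : Type*} [Fintype ι] : ∀ᵐ x : ι → ℝ, IsUnit x := by
  simp only [Pi.isUnit_iff, isUnit_iff_ne_zero, ae_all_iff]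
  exact fun i =>
    (Measure.quasiMeasurePreserving_eval (fun _ => volume) i).ae (Measure.ae_ne volume 0)

section Fourier

variable {E F : Type*} [NormedAddCommGroup E] [MeasurableSpace E] [BorelSpace E]
  [NormedAddCommGroup F]

theorem ae_eq_of_forall_integral_schwartzMap_smul_eq [NormedSpace ℝ E] [FiniteDimensional ℝ E]
    [NormedSpace ℂ F] [CompleteSpace F] {μ : Measure E} {f g : E → F}
    (hf : LocallyIntegrable f μ) (hg : LocallyIntegrable g μ)
    (h : ∀ φ : 𝓢(E, ℂ), ∫ x, φ x • f x ∂μ = ∫ x, φ x • g x ∂μ) : f =ᵐ[μ] g := by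
  refine ae_eq_of_integral_contDiff_smul_eq hf hg fun φ φ_smooth φ_cpt => ?_
  have hcpt : HasCompactSupport (Complex.ofRealCLM ∘ φ) := φ_cpt.comp_left rfl
  have hsmooth : ContDiff ℝ ∞ (Complex.ofRealCLM ∘ φ) := by fun_prop
  simpa using h (hcpt.toSchwartzMap hsmooth)

theorem memLp_fourierChar_smul [InnerProductSpace ℝ E] [NormedSpace ℂ F] {p : ENNReal}
    {μ : Measure E} {f : E → F} (hf : MemLp f p μ) (s : E) :
    MemLp (fun x => 𝐞 ⟪s, x⟫_ℝ • f x) p μ := by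
  have hchar : Continuous fun x : E => 𝐞 ⟪s, x⟫_ℝ := by
    have := Real.continuous_fourierChar
    fun_prop
  exact hf.of_le (hchar.aestronglyMeasurable.smul hf.1) (.of_forall fun x => by simp)

variable [InnerProductSpace ℝ E] [FiniteDimensional ℝ E]

theorem ae_eq_zero_of_fourier_eq_zero [NormedSpace ℂ F] [CompleteSpace F] {f : E → F}
    (hf : Integrable f) (h : 𝓕 f = 0) : f =ᵐ[volume] 0 := by
  refine ae_eq_of_forall_integral_schwartzMap_smul_eq hf.locallyIntegrable
    locallyIntegrable_zero fun φ => ?_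
  calc ∫ x, φ x • f x = ∫ x, 𝓕 ⇑(𝓕⁻ φ : 𝓢(E, ℂ)) x • f x := by
        simp only [← SchwartzMap.fourier_coe, FourierTransform.fourier_fourierInv_eq]
    _ = ∫ x, (𝓕⁻ φ : 𝓢(E, ℂ)) x • 𝓕 f x := by
        simpa only [flip_innerₗ] using! VectorFourier.integral_fourierIntegral_smul_eq_flip
          (L := innerₗ E) Real.continuous_fourierChar continuous_inner
          (𝓕⁻ φ : 𝓢(E, ℂ)).integrable hf
    _ = ∫ x, φ x • (0 : E → F) x := by simp [h]

theorem fourierInv_compSubConstCLM [NormedSpace ℂ F] (φ : 𝓢(E, F)) (s v : E) :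
    𝓕⁻ (φ.compSubConstCLM ℂ s) v = 𝐞 ⟪s, v⟫_ℝ • 𝓕⁻ φ v := by
  have := congrFun (VectorFourier.fourierIntegral_comp_add_right 𝐞 volume (-innerₗ E) φ (-s)) v
  simpa [SchwartzMap.fourierInv_coe, ← sub_eq_add_neg] using! this

theorem fourier_comp_linearEquiv [NormedSpace ℂ F] {A B : E ≃ₗ[ℝ] E}
    (hAB : ∀ x y, ⟪A x, B y⟫_ℝ = ⟪x, y⟫_ℝ) (f : E → F) (ξ : E) :
    𝓕 (f ∘ A) ξ = |LinearMap.det (A : E →ₗ[ℝ] E)|⁻¹ • 𝓕 f (B ξ) := by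
  simp only [Real.fourier_eq, Function.comp_apply, ← hAB _ ξ]
  exact integral_comp_linearEquiv volume A fun v => 𝐞 (-⟪v, B ξ⟫_ℝ) • f v

variable [InnerProductSpace ℂ F] [CompleteSpace F]

theorem integral_smul_fourier_eq (f : Lp F 2 (volume : Measure E)) (φ : 𝓢(E, ℂ)) :
    ∫ x, φ x • 𝓕 f x = ∫ x, 𝓕 φ x • f x := by
  simpa using congr($(Lp.fourier_toTemperedDistribution_eq f) φ).symm

theorem fourier_ae_eq_of_forall_integral_eq {f : Lp F 2 (volume : Measure E)} {g : E → F}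
    (hg : LocallyIntegrable g) (h : ∀ φ : 𝓢(E, ℂ), ∫ x, 𝓕 φ x • f x = ∫ x, φ x • g x) :
    (𝓕 f : Lp F 2 (volume : Measure E)) =ᵐ[volume] g :=
  ae_eq_of_forall_integral_schwartzMap_smul_eq ((Lp.memLp _).locallyIntegrable one_le_two) hg
    fun φ => (integral_smul_fourier_eq f φ).trans (h φ)

theorem fourier_translate_ae_eq {f h : Lp F 2 (volume : Measure E)} {s : E}
    (hh : h =ᵐ[volume] fun x => f (x - s)) :
    (𝓕 h : Lp F 2 (volume : Measure E)) =ᵐ[volume] fun ξ => 𝐞 ⟪-s, ξ⟫_ℝ • 𝓕 f ξ := by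
  refine fourier_ae_eq_of_forall_integral_eq
    ((memLp_fourierChar_smul (Lp.memLp _) (-s)).locallyIntegrable one_le_two) fun φ => ?_
  set ψ : 𝓢(E, ℂ) := 𝓕⁻ ((𝓕 φ).compSubConstCLM ℂ (-s)) with hψ
  calc ∫ x, 𝓕 φ x • h x = ∫ x, 𝓕 φ x • f (x - s) :=
        integral_congr_ae (hh.mono fun x hx => congr(𝓕 φ x • $hx))
    _ = ∫ x, 𝓕 φ (x + s) • f x := by
        simpa using integral_sub_right_eq_self (fun x => 𝓕 φ (x + s) • f x) s
    _ = ∫ x, 𝓕 ψ x • f x := by simp [hψ]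
    _ = ∫ ξ, ψ ξ • 𝓕 f ξ := (integral_smul_fourier_eq f ψ).symm
    _ = ∫ ξ, φ ξ • 𝐞 ⟪-s, ξ⟫_ℝ • 𝓕 f ξ := by
        simp only [hψ, fourierInv_compSubConstCLM, FourierTransform.fourierInv_fourier_eq,
          smul_assoc, smul_comm (φ _)]

theorem fourier_comp_linearEquiv_ae_eq {A B : E ≃ₗ[ℝ] E} (hAB : ∀ x y, ⟪A x, B y⟫_ℝ = ⟪x, y⟫_ℝ)
    {f h : Lp F 2 (volume : Measure E)} (hh : h =ᵐ[volume] f ∘ A) :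
    (𝓕 h : Lp F 2 (volume : Measure E)) =ᵐ[volume]
      fun ξ => |LinearMap.det (A : E →ₗ[ℝ] E)|⁻¹ • 𝓕 f (B ξ) := by
  refine fourier_ae_eq_of_forall_integral_eq
    (((memLp_comp_linearEquiv (Lp.memLp _) B).const_smul _).locallyIntegrable one_le_two)
    fun φ => ?_
  set ψ : 𝓢(E, ℂ) :=
    SchwartzMap.compCLMOfContinuousLinearEquiv ℂ B.symm.toContinuousLinearEquiv φ
  have hψ (ξ) : ψ (B ξ) = φ ξ := congrArg φ (B.symm_apply_apply ξ)
  have hBA (x y) : ⟪B x, A y⟫_ℝ = ⟪x, y⟫_ℝ := by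
    rw [real_inner_comm, hAB, real_inner_comm]
  have hφ (x) : 𝓕 φ x = |LinearMap.det (B : E →ₗ[ℝ] E)|⁻¹ • 𝓕 ψ (A x) := by
    rw [SchwartzMap.fourier_coe, SchwartzMap.fourier_coe, ← fourier_comp_linearEquiv hBA]
    exact congr(𝓕 $(funext fun ξ => (hψ ξ).symm) x)
  calc ∫ x, 𝓕 φ x • h x
      = ∫ x, |LinearMap.det (B : E →ₗ[ℝ] E)|⁻¹ • 𝓕 ψ (A x) • f (A x) :=
        integral_congr_ae <| hh.mono fun x hx => by
          simp only [hx, hφ, smul_assoc, Function.comp_apply]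
    _ = |LinearMap.det (A : E →ₗ[ℝ] E)|⁻¹ •
          |LinearMap.det (B : E →ₗ[ℝ] E)|⁻¹ • ∫ x, 𝓕 ψ x • f x := by
        rw [integral_smul, integral_comp_linearEquiv volume A fun x => 𝓕 ψ x • f x, smul_comm]
    _ = |LinearMap.det (A : E →ₗ[ℝ] E)|⁻¹ • ∫ ξ, ψ (B ξ) • 𝓕 f (B ξ) := by
        rw [← integral_smul_fourier_eq, ← integral_comp_linearEquiv]
    _ = ∫ ξ, φ ξ • |LinearMap.det (A : E →ₗ[ℝ] E)|⁻¹ • 𝓕 f (B ξ) := by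
        simp only [hψ, smul_comm (φ _), integral_smul]

theorem fourier_inner_fourier (f g : Lp F 2 (volume : Measure E)) (s : E) :
    𝓕 (fun ξ => ⟪𝓕 g ξ, 𝓕 f ξ⟫_ℂ) s = ∫ x, ⟪g x, f (x - s)⟫_ℂ := by
  have hs := measurePreserving_sub_right (volume : Measure E) s
  have htranslate := Lp.coeFn_compMeasurePreserving f hs
  calc _ = ⟪𝓕 g, 𝓕 (Lp.compMeasurePreserving _ hs f)⟫_ℂ := by
        rw [L2.inner_def, Real.fourier_eq]
        refine integral_congr_ae ?_
        filter_upwards [fourier_translate_ae_eq htranslate] with ξ hξ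
        rw [hξ, Circle.smul_def, Circle.smul_def, inner_smul_right, smul_eq_mul, inner_neg_left,
          real_inner_comm]
    _ = ⟪g, Lp.compMeasurePreserving _ hs f⟫_ℂ := Lp.inner_fourier_eq _ _
    _ = ∫ x, ⟪g x, f (x - s)⟫_ℂ :=
        integral_congr_ae (htranslate.mono fun x hx => congr(⟪g x, $hx⟫_ℂ))

theorem ae_inner_fourier_eq_zero {f g : Lp F 2 (volume : Measure E)}
    (h : ∀ s, ∫ x, ⟪g x, f (x - s)⟫_ℂ = 0) :
    ∀ᵐ ξ, ⟪𝓕 g ξ, 𝓕 f ξ⟫_ℂ = 0 :=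
  ae_eq_zero_of_fourier_eq_zero (L2.integrable_inner _ _)
    (funext fun s => (fourier_inner_fourier f g s).trans (h s))

theorem ae_inner_fourier_comp_eq_zero {A B : E ≃ₗ[ℝ] E} (hAB : ∀ x y, ⟪A x, B y⟫_ℝ = ⟪x, y⟫_ℝ)
    {f g : Lp F 2 (volume : Measure E)} (h : ∀ s, ∫ x, ⟪g x, f (A (x - s))⟫_ℂ = 0) :
    ∀ᵐ ξ, ⟪𝓕 g ξ, 𝓕 f (B ξ)⟫_ℂ = 0 := by
  have hfA := memLp_comp_linearEquiv (Lp.memLp f) A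
  have hzero : ∀ s, ∫ x, ⟪g x, hfA.toLp _ (x - s)⟫_ℂ = 0 := fun s => by
    rw [← h s]
    have hs := (measurePreserving_sub_right (volume : Measure E) s).quasiMeasurePreserving
    exact integral_congr_ae ((hs.ae hfA.coeFn_toLp).mono fun x hx => congrArg (inner ℂ (g x)) hx)
  filter_upwards [ae_inner_fourier_eq_zero hzero,
    fourier_comp_linearEquiv_ae_eq hAB hfA.coeFn_toLp] with ξ hξ hfξ
  rw [hfξ, ← Complex.coe_smul, inner_smul_right, mul_eq_zero] at hξ
  refine hξ.resolve_left ?_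
  simpa using A.isUnit_det'.ne_zero

end Fourier

section CoordinateDilation

variable {ι : Type*}

/-- The linear automorphism of `EuclideanSpace ℝ ι` multiplying each coordinate by the corresponding
coordinate of `a`. A vector with nonzero coordinates is encoded as a unit of the ring `ι → ℝ`, so
that it can be inverted. -/
def coordinateDilation (a : (ι → ℝ)ˣ) : EuclideanSpace ℝ ι ≃ₗ[ℝ] EuclideanSpace ℝ ι :=
  WithLp.linearEquiv 2 ℝ (ι → ℝ) ≪≫ₗ Units.mulLeftLinearEquiv ℝ (ι → ℝ) a ≪≫ₗ
    (WithLp.linearEquiv 2 ℝ (ι → ℝ)).symm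

theorem ofLp_coordinateDilation (a : (ι → ℝ)ˣ) (x : EuclideanSpace ℝ ι) :
    (coordinateDilation a x).ofLp = a * x.ofLp := rfl

variable [Fintype ι]

theorem inner_coordinateDilation_inv (a : (ι → ℝ)ˣ) (x y : EuclideanSpace ℝ ι) :
    ⟪coordinateDilation a⁻¹ x, coordinateDilation a y⟫_ℝ = ⟪x, y⟫_ℝ := by
  simp only [PiLp.inner_apply, ofLp_coordinateDilation, Pi.mul_apply]
  refine Finset.sum_congr rfl fun i _ => ?_
  have hinv : (a⁻¹).1 i * a.1 i = 1 := congrFun a.inv_mul i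
  simp only [RCLike.inner_apply, conj_trivial]
  linear_combination (x i * y i) * hinv

theorem eq_zero_or_eq_zero_of_forall_integral_inner_dilation
    {f g : Lp ℂ 2 (volume : Measure (EuclideanSpace ℝ ι))}
    (h : ∀ (a : (ι → ℝ)ˣ) (s : EuclideanSpace ℝ ι),
      ∫ x, ⟪g x, f (coordinateDilation a (x - s))⟫_ℂ = 0) : g = 0 ∨ f = 0 := by
  have hdual (a : (ι → ℝ)ˣ) :
      ∀ᵐ x : ι → ℝ, 𝓕 g (WithLp.toLp 2 x) = 0 ∨ 𝓕 f (WithLp.toLp 2 (a * x)) = 0 := by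
    have := ae_inner_fourier_comp_eq_zero (inner_coordinateDilation_inv a) (h a⁻¹)
    filter_upwards [(PiLp.volume_preserving_toLp ι).quasiMeasurePreserving.ae this] with x hx
    exact (mul_eq_zero.1 hx).symm.imp_left star_eq_zero.1
  have hmeas (k : Lp ℂ 2 (volume : Measure (EuclideanSpace ℝ ι))) :
      MeasurableSet {x : ι → ℝ | k (WithLp.toLp 2 x) = 0} :=
    (Lp.stronglyMeasurable k).measurable.comp (PiLp.volume_preserving_toLp ι).measurable
      (measurableSet_singleton 0)
  have hzero (k : Lp ℂ 2 (volume : Measure (EuclideanSpace ℝ ι)))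
      (hk : ∀ᵐ x : ι → ℝ, 𝓕 k (WithLp.toLp 2 x) = 0) : k = 0 := by
    have := (PiLp.volume_preserving_ofLp ι).quasiMeasurePreserving.ae hk
    exact (Lp.fourierTransformₗᵢ _ _).map_eq_zero_iff.1 (Lp.eq_zero_iff_ae_eq_zero.2 this)
  exact (ae_or_ae_of_forall_units_mul ae_isUnit_pi (hmeas _) (hmeas _) hdual).imp
    (hzero g) (hzero f)

theorem eq_zero_or_eq_zero_of_forall_integral_inner_mul_sub
    {f g : Lp ℂ 2 (volume : Measure (ι → ℝ))}
    (h : ∀ (a : (ι → ℝ)ˣ) (t : ι → ℝ), ∫ x, ⟪g x, f (a * (x - t))⟫_ℂ = 0) : g = 0 ∨ f = 0 := by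
  have hofLp := PiLp.volume_preserving_ofLp ι
  have hinj := (Lp.isometry_compMeasurePreserving (E := ℂ) (p := 2) hofLp).injective
  have hcoe := fun k : Lp ℂ 2 (volume : Measure (ι → ℝ)) => Lp.coeFn_compMeasurePreserving k hofLp
  rw [← hinj.eq_iff' (map_zero (Lp.compMeasurePreserving _ hofLp)),
    ← hinj.eq_iff' (map_zero (Lp.compMeasurePreserving _ hofLp))]
  refine eq_zero_or_eq_zero_of_forall_integral_inner_dilation fun a s => ?_
  have haffine := (quasiMeasurePreserving_linearEquiv volume (coordinateDilation a)).comp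
    (measurePreserving_sub_right volume s).quasiMeasurePreserving
  calc _ = ∫ x : EuclideanSpace ℝ ι, ⟪g x.ofLp, f (a * (x.ofLp - s.ofLp))⟫_ℂ := by
        refine integral_congr_ae ?_
        filter_upwards [hcoe g, haffine.ae (hcoe f)] with x hgx hfx
        exact congrArg₂ (inner ℂ) hgx hfx
    _ = ∫ x, ⟪g x, f (a * (x - s.ofLp))⟫_ℂ :=
        hofLp.integral_comp (MeasurableEquiv.toLp 2 (ι → ℝ)).symm.measurableEmbedding
          fun x => ⟪g x, f (a * (x - s.ofLp))⟫_ℂ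
    _ = 0 := h a s.ofLp

end CoordinateDilation

section OrthogonalComplement

variable {𝕜 H : Type*} [RCLike 𝕜] [NormedAddCommGroup H] [InnerProductSpace 𝕜 H]

theorem eq_bot_or_eq_top_of_forall_mem_orthogonal (V : Submodule 𝕜 H) [V.HasOrthogonalProjection]
    (h : ∀ f ∈ V, ∀ g ∈ Vᗮ, g = 0 ∨ f = 0) : V = ⊥ ∨ V = ⊤ := by
  refine or_iff_not_imp_right.2 fun hV => ?_
  obtain ⟨g, hg, hg0⟩ :=
    Submodule.exists_mem_ne_zero_of_ne_bot fun hbot => hV (Submodule.orthogonal_eq_bot_iff.1 hbot)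
  exact (Submodule.eq_bot_iff V).2 fun f hf => (h f hf g hg).resolve_left hg0

end OrthogonalComplement

section QuasiRegular

variable {ι F : Type*} [Fintype ι] [DecidableEq ι] [NormedAddCommGroup F]

theorem memLp_quasiRegular [NormedSpace ℝ F] (L : GL ι ℝ) (t : ι → ℝ)
    (f : Lp F 2 (volume : Measure (ι → ℝ))) :
    MemLp (fun x => |L.1.det| ^ (-(1 / 2 : ℝ)) • f (L⁻¹.1 *ᵥ (x - t))) 2 volume := by
  let A := LinearMap.GeneralLinearGroup.generalLinearEquiv ℝ _
    (Matrix.GeneralLinearGroup.toLin L⁻¹)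
  exact ((memLp_comp_linearEquiv (Lp.memLp f) A).comp_measurePreserving
    (measurePreserving_sub_right volume t)).const_smul _

/-- The operator `π_{(L,t)}` of the quasi-regular representation of the affine group on
`L²(ℝᵐ)`. -/
noncomputable def quasiRegular [NormedSpace ℝ F] (L : GL ι ℝ) (t : ι → ℝ)
    (f : Lp F 2 (volume : Measure (ι → ℝ))) : Lp F 2 (volume : Measure (ι → ℝ)) :=
  (memLp_quasiRegular L t f).toLp

theorem coeFn_quasiRegular [NormedSpace ℝ F] (L : GL ι ℝ) (t : ι → ℝ)
    (f : Lp F 2 (volume : Measure (ι → ℝ))) :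
    quasiRegular L t f =ᵐ[volume]
      fun x => |L.1.det| ^ (-(1 / 2 : ℝ)) • f (L⁻¹.1 *ᵥ (x - t)) :=
  (memLp_quasiRegular L t f).coeFn_toLp

theorem inner_quasiRegular [InnerProductSpace ℂ F] (L : GL ι ℝ) (t : ι → ℝ)
    (f g : Lp F 2 (volume : Measure (ι → ℝ))) :
    ⟪g, quasiRegular L t f⟫_ℂ =
      |L.1.det| ^ (-(1 / 2 : ℝ)) • ∫ x, ⟪g x, f (L⁻¹.1 *ᵥ (x - t))⟫_ℂ := by
  rw [L2.inner_def, ← integral_smul]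
  refine integral_congr_ae ((coeFn_quasiRegular L t f).mono fun x hx => ?_)
  simp only [hx, inner_smul_right_eq_smul]

theorem integral_inner_eq_zero_of_inner_quasiRegular_eq_zero [InnerProductSpace ℂ F] {L : GL ι ℝ}
    {t : ι → ℝ} {f g : Lp F 2 (volume : Measure (ι → ℝ))}
    (h : ⟪g, quasiRegular L t f⟫_ℂ = 0) : ∫ x, ⟪g x, f (L⁻¹.1 *ᵥ (x - t))⟫_ℂ = 0 := by
  rw [inner_quasiRegular, smul_eq_zero] at h
  exact h.resolve_left (Real.rpow_pos_of_pos (abs_pos.2 L.det.ne_zero) _).ne'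

theorem statement8_general (V : Submodule ℂ (Lp ℂ 2 (volume : Measure (ι → ℝ))))
    (hclosed : IsClosed (V : Set (Lp ℂ 2 (volume : Measure (ι → ℝ)))))
    (hinv : ∀ L : GL ι ℝ, L.1.IsDiag → ∀ t, ∀ f ∈ V, quasiRegular L t f ∈ V) :
    V = ⊥ ∨ V = ⊤ := by
  have : CompleteSpace V := hclosed.completeSpace_coe
  refine eq_bot_or_eq_top_of_forall_mem_orthogonal V fun f hf g hg =>
    eq_zero_or_eq_zero_of_forall_integral_inner_mul_sub fun a t => ?_
  let L : GL ι ℝ := Units.map (diagonalRingHom ι ℝ).toMonoidHom a⁻¹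
  have hL : L.1.IsDiag := isDiag_diagonal _
  have hLinv (x) : L⁻¹.1 *ᵥ x = a * x := funext fun i => mulVec_diagonal _ _ _
  simpa only [hLinv] using integral_inner_eq_zero_of_inner_quasiRegular_eq_zero
    (Submodule.inner_left_of_mem_orthogonal (hinv L hL t f hf) hg)

end QuasiRegular

/-- Let `G = Aff(m) = GL(m,ℝ) ⋉ ℝᵐ` act on `ℝᵐ` by `(L,t)·x = Lx + t`,
and let `π` be the quasi-regular representation on `L²(ℝᵐ)`,
`π_{(L,t)}[f](x) = |det L|^{-1/2} f(L⁻¹(x - t))`.  Then `π` is irreducible: its only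
closed invariant subspaces are `{0}` and `L²(ℝᵐ)`. -/
theorem statement8 (m : ℕ)
    (V : Submodule ℂ (Lp ℂ 2 (volume : Measure (Fin m → ℝ))))
    (hclosed : IsClosed (V : Set (Lp ℂ 2 (volume : Measure (Fin m → ℝ)))))
    (hinv : ∀ (L : GL (Fin m) ℝ) (t : Fin m → ℝ)
      (f h : Lp ℂ 2 (volume : Measure (Fin m → ℝ))), f ∈ V →
      (⇑h =ᵐ[volume] fun x =>
        (|((↑L : Matrix (Fin m) (Fin m) ℝ)).det| ^ (-(1 / 2 : ℝ)) : ℝ) •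
          f ((↑L⁻¹ : Matrix (Fin m) (Fin m) ℝ) *ᵥ (x - t))) →
      h ∈ V) :
    V = ⊥ ∨ V = ⊤ :=
  statement8_general V hclosed fun L _ t f hf => hinv L t f _ hf (coeFn_quasiRegular L t f)
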